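/- arXiv:cond-mat/0205123 — 2 statements merged into one kernel-verified Lean document; each statement's English description precedes it below -/
import Mathlib

section
/- Let x and x̄ be two piecewise constant functional order parameters (with possibly different level sequences) such that x(q) ≤ x̄(q) for all q ∈ [0,1]. Then the Parisi functions satisfy f(q,y;x,β) ≤ f(q,y;x̄,β) for every q ∈ [0,1], every y ∈ ℝ, and every β ≥ 0. -/
open MeasureTheory ProbabilityTheory Filter

noncomputable section

/-! ## Gaussian disorder -/

/-- The standard (centered, unit variance) Gaussian measure on `ℝ`. -/
def stdGauss : Measure ℝ := gaussianReal 0 1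

instance : IsProbabilityMeasure stdGauss := by unfold stdGauss; infer_instance

/-- `N` i.i.d. standard Gaussian variables. -/
def gaussN (N : ℕ) : Measure (Fin N → ℝ) := Measure.pi fun _ => stdGauss

instance (N : ℕ) : IsProbabilityMeasure (gaussN N) := by unfold gaussN; infer_instance

/-- The i.i.d. standard Gaussian couplings `J_{ij}` (only entries with `i < j` are used). -/
def gaussC (N : ℕ) : Measure (Fin N → Fin N → ℝ) := Measure.pi fun _ => gaussN N

instance (N : ℕ) : IsProbabilityMeasure (gaussC N) := by unfold gaussC; infer_instance

/-- The i.i.d. standard Gaussian one-body fields `J_i^a`, `a = 1, …, K`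
(row `⟨a-1⟩ : Fin K` corresponds to the level `a` of the paper). -/
def gaussS (K N : ℕ) : Measure (Fin K → Fin N → ℝ) := Measure.pi fun _ => gaussN N

instance (K N : ℕ) : IsProbabilityMeasure (gaussS K N) := by unfold gaussS; infer_instance

/-- I.i.d. standard Gaussian couplings indexed by subsets of sites, for the p-spin model
(only the cardinality-`p` subsets are used). -/
def gaussP (N : ℕ) : Measure (Finset (Fin N) → ℝ) := Measure.pi fun _ => stdGauss

instance (N : ℕ) : IsProbabilityMeasure (gaussP N) := by unfold gaussP; infer_instance

/-! ## Spins and overlaps -/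

/-- The spin value (`±1`) of a Boolean configuration entry. -/
def spin (b : Bool) : ℝ := if b then 1 else -1

/-- The overlap `q₁₂ = N⁻¹ ∑ᵢ σᵢ⁽¹⁾ σᵢ⁽²⁾` of two replicas. -/
def overlap (N : ℕ) (σ τ : Fin N → Bool) : ℝ := (N : ℝ)⁻¹ * ∑ i, spin (σ i) * spin (τ i)

/-! ## Piecewise constant functional order parameters and the Parisi function -/

/-- One backward step of the Parisi recursion on an interval of constancy of the
functional order parameter: from `g = f(q_a, ·)`, with value `m` of the order parameter
and `s = q_a - q`, produce `f(q, ·)`. -/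
def pStep (m s : ℝ) (g : ℝ → ℝ) (y : ℝ) : ℝ :=
  if m = 0 then ∫ z, g (y + z * Real.sqrt s) ∂stdGauss
  else m⁻¹ * Real.log (∫ z, Real.exp (m * g (y + z * Real.sqrt s)) ∂stdGauss)

/-- `parisiLevel K q m β j` is the Parisi function `f(q_{K-j}, ·; x, β)` at the node
`q_{K-j}`, obtained by `j` backward steps from the final condition `f(q_K, y) = log cosh (β y)`. -/
def parisiLevel (K : ℕ) (q m : ℕ → ℝ) (β : ℝ) : ℕ → ℝ → ℝ
  | 0 => fun y => Real.log (Real.cosh (β * y))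
  | j + 1 => pStep (m (K - j)) (q (K - j) - q (K - j - 1)) (parisiLevel K q m β j)

/-- The Parisi function `f(r, y; x, β)` for a piecewise constant order parameter `x`
given by nodes `q` and values `m`:  for `q_{a-1} ≤ r ≤ q_a` it is obtained from
`f(q_a, ·)` by one backward step with value `m_a` over a time `q_a - r`. -/
def parisiF (K : ℕ) (q m : ℕ → ℝ) (β : ℝ) (r y : ℝ) : ℝ :=
  pStep (m (sInf {a : ℕ | r ≤ q a})) (q (sInf {a : ℕ | r ≤ q a}) - r)
    (parisiLevel K q m β (K - sInf {a : ℕ | r ≤ q a})) y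

/-- The functional order parameter as a function: `x(r) = m_a` for `q_{a-1} ≤ r < q_a`,
and `x(1) = m_K`. -/
def xFun (K : ℕ) (q m : ℕ → ℝ) (r : ℝ) : ℝ :=
  if 1 ≤ r then m K else m (sInf {a : ℕ | r < q a})

/-- A piecewise constant functional order parameter:
`0 = q_0 ≤ q_1 ≤ … ≤ q_K = 1`, `0 ≤ m_1 ≤ … ≤ m_K ≤ 1`,
with the conventions `m_0 = 0`, `m_{K+1} = 1`. -/
structure OrderParam where
  K : ℕ
  hK : 1 ≤ K
  q : ℕ → ℝ
  m : ℕ → ℝ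
  hq0 : q 0 = 0
  hqK : q K = 1
  hq_mono : ∀ a, a < K → q a ≤ q (a + 1)
  hm0 : m 0 = 0
  hmtop : m (K + 1) = 1
  hm1 : 0 ≤ m 1
  hm_mono : ∀ a, 1 ≤ a → a < K → m a ≤ m (a + 1)
  hmK : m K ≤ 1

/-- Guerra's trial function `ᾱ(β, h; x) = log 2 + f(0, h; x, β) - (β²/2) ∫₀¹ r x(r) dr`. -/
def trialAlpha (K : ℕ) (q m : ℕ → ℝ) (β h : ℝ) : ℝ :=
  Real.log 2 + parisiLevel K q m β K h - β ^ 2 / 2 * ∫ r in (0 : ℝ)..1, r * xFun K q m r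

/-! ## The Sherrington–Kirkpatrick model -/

/-- The SK Hamiltonian `H_N(σ, h, J) = -(1/√N) ∑_{i<j} J_{ij} σ_i σ_j - h ∑_i σ_i`. -/
def hamSK (N : ℕ) (h : ℝ) (Jc : Fin N → Fin N → ℝ) (σ : Fin N → Bool) : ℝ :=
  -(1 / Real.sqrt N) * ∑ i, ∑ j, (if i < j then Jc i j * spin (σ i) * spin (σ j) else 0)
    - h * ∑ i, spin (σ i)

/-- The SK partition function `Z_N(β, h, J)`. -/
def ZSK (N : ℕ) (β h : ℝ) (Jc : Fin N → Fin N → ℝ) : ℝ :=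
  ∑ σ : Fin N → Bool, Real.exp (-(β * hamSK N h Jc σ))

/-- The quenched average `N⁻¹ E log Z_N(β, h, J)`. -/
def quenchedFE (N : ℕ) (β h : ℝ) : ℝ :=
  (N : ℝ)⁻¹ * ∫ Jc, Real.log (ZSK N β h Jc) ∂gaussC N

/-- The ground state energy density `e_N(J, h)`, defined by
`-e_N(J, h) = N⁻¹ min_σ H_N(σ, h, J)`. -/
def eGS (N : ℕ) (h : ℝ) (Jc : Fin N → Fin N → ℝ) : ℝ :=
  -((N : ℝ)⁻¹ * ⨅ σ : Fin N → Bool, hamSK N h Jc σ)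

/-- The quenched ground state energy density `e_N(h) = E(e_N(J, h))`. -/
def eQuenched (N : ℕ) (h : ℝ) : ℝ := ∫ Jc, eGS N h Jc ∂gaussC N

/-! ## The interpolating system -/

/-- The interpolating Boltzmann factor. -/
def bFac (N K : ℕ) (β h t : ℝ) (q : ℕ → ℝ) (Jc : Fin N → Fin N → ℝ)
    (Js : Fin K → Fin N → ℝ) (σ : Fin N → Bool) : ℝ :=
  Real.exp (β * Real.sqrt (t / N) *
        ∑ i, ∑ j, (if i < j then Jc i j * spin (σ i) * spin (σ j) else 0)
      + β * h * ∑ i, spin (σ i)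
      + β * Real.sqrt (1 - t) *
          ∑ a : Fin K, Real.sqrt (q (a.val + 1) - q a.val) * ∑ i, Js a i * spin (σ i))

/-- The interpolating partition function `Z̃_N(β, h; t; x; J)`. -/
def Ztil (N K : ℕ) (β h t : ℝ) (q : ℕ → ℝ) (Jc : Fin N → Fin N → ℝ)
    (Js : Fin K → Fin N → ℝ) : ℝ :=
  ∑ σ : Fin N → Bool, bFac N K β h t q Jc Js σ

/-- `Wrec … j` is the random variable `Z_{K-j}`:  `Z_K = Z̃_N` and
`Z_{a-1} = (E_a (Z_a^{m_a}))^{1/m_a}`, where `E_a` integrates the Gaussian row `J^a`. -/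
def Wrec (N K : ℕ) (β h t : ℝ) (q m : ℕ → ℝ) :
    ℕ → (Fin N → Fin N → ℝ) → (Fin K → Fin N → ℝ) → ℝ
  | 0 => Ztil N K β h t q
  | j + 1 => fun Jc Js =>
      if hj : j < K then
        (∫ g : Fin N → ℝ,
            (Wrec N K β h t q m j Jc (Function.update Js ⟨K - 1 - j, by omega⟩ g)) ^ m (K - j)
          ∂gaussN N) ^ (m (K - j))⁻¹
      else Wrec N K β h t q m j Jc Js

/-- `Zrec … a` is the random variable `Z_a` of the broken replica interpolation. -/
def Zrec (N K : ℕ) (β h t : ℝ) (q m : ℕ → ℝ) (a : ℕ) :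
    (Fin N → Fin N → ℝ) → (Fin K → Fin N → ℝ) → ℝ :=
  Wrec N K β h t q m (K - a)

/-- The interpolating auxiliary function `α̃_N(t) = N⁻¹ E₀ log Z₀`. -/
def atilde (N K : ℕ) (β h : ℝ) (q m : ℕ → ℝ) (t : ℝ) : ℝ :=
  (N : ℝ)⁻¹ * ∫ Jc, Real.log (Wrec N K β h t q m K Jc 0) ∂gaussC N

/-- The normalized weight `f_a = Z_a^{m_a} / E_a(Z_a^{m_a}) = Z_a^{m_a} / Z_{a-1}^{m_a}`. -/
def fWeight (N K : ℕ) (β h t : ℝ) (q m : ℕ → ℝ) (a : ℕ) (Jc : Fin N → Fin N → ℝ)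
    (Js : Fin K → Fin N → ℝ) : ℝ :=
  Zrec N K β h t q m a Jc Js ^ m a / Zrec N K β h t q m (a - 1) Jc Js ^ m a

/-- The Gibbs expectation `ω(A)` of the interpolating Boltzmann factor. -/
def gibbs (N K : ℕ) (β h t : ℝ) (q : ℕ → ℝ) (A : (Fin N → Bool) → ℝ)
    (Jc : Fin N → Fin N → ℝ) (Js : Fin K → Fin N → ℝ) : ℝ :=
  (∑ σ : Fin N → Bool, A σ * bFac N K β h t q Jc Js σ) / Ztil N K β h t q Jc Js

/-- The two-replica Gibbs product expectation `Ω(A)`. -/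
def gibbs2 (N K : ℕ) (β h t : ℝ) (q : ℕ → ℝ) (A : (Fin N → Bool) → (Fin N → Bool) → ℝ)
    (Jc : Fin N → Fin N → ℝ) (Js : Fin K → Fin N → ℝ) : ℝ :=
  (∑ σ : Fin N → Bool, ∑ τ : Fin N → Bool,
      A σ τ * bFac N K β h t q Jc Js σ * bFac N K β h t q Jc Js τ) /
    Ztil N K β h t q Jc Js ^ 2

/-- `omT1 … A j` is the partially averaged state `ω̃_{K-j}(A)`:
`ω̃_K = ω` and `ω̃_{a-1}(·) = E_a (f_a ω̃_a(·))`. -/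
def omT1 (N K : ℕ) (β h t : ℝ) (q m : ℕ → ℝ) (A : (Fin N → Bool) → ℝ) :
    ℕ → (Fin N → Fin N → ℝ) → (Fin K → Fin N → ℝ) → ℝ
  | 0 => gibbs N K β h t q A
  | j + 1 => fun Jc Js =>
      if hj : j < K then
        ∫ g : Fin N → ℝ,
          fWeight N K β h t q m (K - j) Jc (Function.update Js ⟨K - 1 - j, by omega⟩ g) *
            omT1 N K β h t q m A j Jc (Function.update Js ⟨K - 1 - j, by omega⟩ g)
          ∂gaussN N
      else omT1 N K β h t q m A j Jc Js

/-- `omT2 … A j` is the partially averaged two-replica state `Ω̃_{K-j}(A)`: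
`Ω̃_K = Ω` and `Ω̃_{a-1}(·) = E_a (f_a Ω̃_a(·))`. -/
def omT2 (N K : ℕ) (β h t : ℝ) (q m : ℕ → ℝ) (A : (Fin N → Bool) → (Fin N → Bool) → ℝ) :
    ℕ → (Fin N → Fin N → ℝ) → (Fin K → Fin N → ℝ) → ℝ
  | 0 => gibbs2 N K β h t q A
  | j + 1 => fun Jc Js =>
      if hj : j < K then
        ∫ g : Fin N → ℝ,
          fWeight N K β h t q m (K - j) Jc (Function.update Js ⟨K - 1 - j, by omega⟩ g) *
            omT2 N K β h t q m A j Jc (Function.update Js ⟨K - 1 - j, by omega⟩ g)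
          ∂gaussN N
      else omT2 N K β h t q m A j Jc Js

/-- The deformed quenched average `⟨A⟩_a = E(f_1 ⋯ f_a Ω̃_a(A))` at interpolation
parameter `t`, for a function `A` of two replicas. -/
def angA (N K : ℕ) (β h t : ℝ) (q m : ℕ → ℝ) (a : ℕ)
    (A : (Fin N → Bool) → (Fin N → Bool) → ℝ) : ℝ :=
  ∫ Jc, ∫ Js,
      (∏ b ∈ Finset.Icc 1 a, fWeight N K β h t q m b Jc Js) *
        omT2 N K β h t q m A (K - a) Jc Js
    ∂gaussS K N ∂gaussC N

/-! ## Zero temperature (ground state) objects -/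

/-- The zero-temperature Parisi recursion: `parisiLevelBar K q m j` is `f̄(q_{K-j}, ·; x̄)`,
with final condition `f̄(q_K, y) = |y|`. -/
def parisiLevelBar (K : ℕ) (q m : ℕ → ℝ) : ℕ → ℝ → ℝ
  | 0 => fun y => |y|
  | j + 1 => pStep (m (K - j)) (q (K - j) - q (K - j - 1)) (parisiLevelBar K q m j)

/-- A zero-temperature piecewise constant order parameter: nodes
`0 = q_0 ≤ … ≤ q_K = 1` and nondecreasing values `0 ≤ m̄_1 ≤ … ≤ m̄_K`
(no upper bound `1`), with the convention `m̄_0 = 0`. -/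
structure ZeroTParam where
  K : ℕ
  hK : 1 ≤ K
  q : ℕ → ℝ
  m : ℕ → ℝ
  hq0 : q 0 = 0
  hqK : q K = 1
  hq_mono : ∀ a, a < K → q a ≤ q (a + 1)
  hm0 : m 0 = 0
  hm1 : 0 ≤ m 1
  hm_mono : ∀ a, 1 ≤ a → a < K → m a ≤ m (a + 1)

/-- The zero-temperature trial function `α̃(h; x̄) = f̄(0, h; x̄) - (1/2) ∫₀¹ r x̄(r) dr`. -/
def gsTrial (K : ℕ) (q m : ℕ → ℝ) (h : ℝ) : ℝ :=
  parisiLevelBar K q m K h - 1 / 2 * ∫ r in (0 : ℝ)..1, r * xFun K q m r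

/-! ## The p-spin model -/

/-- A piecewise constant functional order parameter on `[0, p/2]`:
`0 = q_0 ≤ … ≤ q_K = p/2` and `0 ≤ m_1 ≤ … ≤ m_K ≤ 1`. -/
structure POrderParam (p : ℕ) where
  K : ℕ
  hK : 1 ≤ K
  q : ℕ → ℝ
  m : ℕ → ℝ
  hq0 : q 0 = 0
  hqK : q K = p / 2
  hq_mono : ∀ a, a < K → q a ≤ q (a + 1)
  hm1 : 0 ≤ m 1
  hm_mono : ∀ a, 1 ≤ a → a < K → m a ≤ m (a + 1)
  hmK : m K ≤ 1

/-- The p-spin Hamiltonian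
`H_N(σ,h,J) = -(p!/(2N^{p-1}))^{1/2} ∑_{i_1<…<i_p} J_{i_1…i_p} σ_{i_1}⋯σ_{i_p} - h ∑_i σ_i`. -/
def hamP (p N : ℕ) (h : ℝ) (J : Finset (Fin N) → ℝ) (σ : Fin N → Bool) : ℝ :=
  -Real.sqrt ((Nat.factorial p : ℝ) / (2 * (N : ℝ) ^ (p - 1))) *
      ∑ S ∈ Finset.powersetCard p (Finset.univ : Finset (Fin N)), J S * ∏ i ∈ S, spin (σ i)
    - h * ∑ i, spin (σ i)

/-- The p-spin partition function. -/
def ZP (p N : ℕ) (β h : ℝ) (J : Finset (Fin N) → ℝ) : ℝ :=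
  ∑ σ : Fin N → Bool, Real.exp (-(β * hamP p N h J σ))

/-- The p-spin quenched average `N⁻¹ E log Z_N^{(p)}(β, h, J)`. -/
def quenchedFEP (p N : ℕ) (β h : ℝ) : ℝ :=
  (N : ℝ)⁻¹ * ∫ J, Real.log (ZP p N β h J) ∂gaussP N

/-- The functional order parameter on `[0, p/2]` as a function. -/
def xFunP (p K : ℕ) (q m : ℕ → ℝ) (r : ℝ) : ℝ :=
  if (p : ℝ) / 2 ≤ r then m K else m (sInf {a : ℕ | r < q a})

/-- The change of variables `q̄(r)` defined by `2r = p q̄^{p-1}`. -/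
def qBar (p : ℕ) (r : ℝ) : ℝ := (2 * r / p) ^ (((p : ℝ) - 1)⁻¹)

/-- The p-spin trial function
`ᾱ_p(β, h; x) = log 2 + f(0, h; x, β) - (β²/2) ∫₀^{p/2} q̄(r) x(r) dr`. -/
def trialAlphaP (p K : ℕ) (q m : ℕ → ℝ) (β h : ℝ) : ℝ :=
  Real.log 2 + parisiLevel K q m β K h
    - β ^ 2 / 2 * ∫ r in (0 : ℝ)..((p : ℝ) / 2), qBar p r * xFunP p K q m r

/-!
The step `pStep m s g y` is the exponential mean `m⁻¹ log E exp (m g(y + √s Z))`, that is, the slope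
between `0` and `m` of the cumulant generating function of `g(y + √s Z)`. This function is convex,
so the step is nondecreasing in `m`; it is also nondecreasing in `g`, and it has the semigroup
property in `s`. By the semigroup property, both Parisi functions may be computed along any common
refinement of the two sets of nodes. There both order parameters are constant between consecutive
nodes, and the two monotonicities propagate the inequality backwards from `r = 1`, one interval at a
time.
-/

open scoped NNReal

section ExpMean

variable {Ω : Type*} [MeasurableSpace Ω] {μ : Measure Ω} {X Y : Ω → ℝ} {m : ℝ}

theorem convexOn_cgf : ConvexOn ℝ (interior (integrableExpSet X μ)) (cgf X μ) := by
  refine convexOn_of_deriv2_nonneg' convex_integrableExpSet.interior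
    analyticOnNhd_cgf.differentiableOn analyticOnNhd_cgf.deriv.differentiableOn fun t ht => ?_
  rw [← iteratedDeriv_eq_iterate, iteratedDeriv_two_cgf_eq_integral ht]
  exact div_nonneg (integral_nonneg fun ω => by positivity) mgf_nonneg

/-- The exponential mean `m⁻¹ log E[exp (m X)]` of a random variable, extended to `m = 0` by
the ordinary mean. A Parisi step is an exponential mean over a Gaussian increment. -/
def expMean (X : Ω → ℝ) (μ : Measure Ω) (m : ℝ) : ℝ :=
  if m = 0 then μ[X] else m⁻¹ * cgf X μ m

@[simp]
theorem expMean_zero : expMean X μ 0 = μ[X] := if_pos rfl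

theorem expMean_of_ne_zero (hm : m ≠ 0) : expMean X μ m = m⁻¹ * cgf X μ m := if_neg hm

theorem expMean_map {Ω' : Type*} [MeasurableSpace Ω'] {ν : Measure Ω'} {φ : Ω' → Ω}
    (hφ : AEMeasurable φ ν) (hX : AEStronglyMeasurable X (ν.map φ)) :
    expMean X (ν.map φ) m = expMean (X ∘ φ) ν m := by
  have hexp : AEStronglyMeasurable (fun ω => Real.exp (m * X ω)) (ν.map φ) :=
    Real.continuous_exp.comp_aestronglyMeasurable (hX.const_mul m)
  simp only [expMean, cgf, mgf_map hφ hexp, integral_map hφ hX, Function.comp_apply]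

theorem exp_mul_expMean [NeZero μ] (hm : m ≠ 0) (hX : m ∈ integrableExpSet X μ) :
    Real.exp (m * expMean X μ m) = mgf X μ m := by
  rw [expMean_of_ne_zero hm, mul_inv_cancel_left₀ hm, exp_cgf hX]

theorem expMean_eq_dslope_cgf [IsProbabilityMeasure μ]
    (hX : 0 ∈ interior (integrableExpSet X μ)) (m : ℝ) :
    expMean X μ m = dslope (cgf X μ) 0 m := by
  rcases eq_or_ne m 0 with rfl | hm
  · rw [expMean_zero, dslope_same, deriv_cgf_zero hX, probReal_univ, div_one]
  · rw [expMean_of_ne_zero hm, dslope_of_ne _ hm, slope_def_field, cgf_zero, sub_zero, sub_zero,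
      inv_mul_eq_div]

theorem monotoneOn_expMean [IsProbabilityMeasure μ] (hX : 0 ∈ interior (integrableExpSet X μ)) :
    MonotoneOn (expMean X μ) (interior (integrableExpSet X μ)) := by
  rw [funext (expMean_eq_dslope_cgf hX), ← Set.insert_sdiff_self_of_mem hX]
  refine MonotoneOn.insert_of_continuousWithinAt ?_ ?_ ?_
  · exact (convexOn_cgf.slope_mono hX).congr fun t ht => (dslope_of_ne _ ht.2).symm
  · rw [← mem_closure_iff_clusterPt]
    exact (dense_compl_singleton (0 : ℝ)).open_subset_closure_inter isOpen_interior hX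
  · exact (continuousAt_dslope_same.2 (analyticAt_cgf hX).differentiableAt).continuousWithinAt

theorem expMean_mono [NeZero μ] (hX : m ∈ interior (integrableExpSet X μ))
    (hY : m ∈ interior (integrableExpSet Y μ)) (hXY : X ≤ᵐ[μ] Y) :
    expMean X μ m ≤ expMean Y μ m := by
  have hXm : m ∈ integrableExpSet X μ := interior_subset hX
  have hYm : m ∈ integrableExpSet Y μ := interior_subset hY
  rcases lt_trichotomy m 0 with hm | rfl | hm
  · rw [expMean_of_ne_zero hm.ne, expMean_of_ne_zero hm.ne]
    exact mul_le_mul_of_nonpos_left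
      (Real.log_le_log (mgf_pos_iff.2 hYm) (mgf_anti_of_nonpos hXY hm.le hXm))
      (inv_nonpos.2 hm.le)
  · rw [expMean_zero, expMean_zero]
    exact integral_mono_ae (integrable_of_mem_interior_integrableExpSet hX)
      (integrable_of_mem_interior_integrableExpSet hY) hXY
  · rw [expMean_of_ne_zero hm.ne', expMean_of_ne_zero hm.ne']
    gcongr
    exact Real.log_le_log (mgf_pos_iff.2 hXm) (mgf_mono_of_nonneg hXY hm.le hYm)

theorem expMean_add_const [IsProbabilityMeasure μ] (hX : m ∈ interior (integrableExpSet X μ))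
    (c : ℝ) : expMean (fun ω => X ω + c) μ m = expMean X μ m + c := by
  rcases eq_or_ne m 0 with rfl | hm
  · simp [integral_add (integrable_of_mem_interior_integrableExpSet hX) (integrable_const c)]
  · have hpos : 0 < mgf X μ m := mgf_pos (interior_subset (s := integrableExpSet X μ) hX)
    rw [expMean_of_ne_zero hm, expMean_of_ne_zero hm, cgf, cgf, mgf_add_const,
      Real.log_mul hpos.ne' (Real.exp_pos _).ne', Real.log_exp]
    field_simp

theorem expMean_conv {M : Type*} [AddMonoid M] [MeasurableSpace M] [MeasurableAdd₂ M]
    {μ ν : Measure M} [SFinite μ] [SFinite ν] [NeZero ν] {X : M → ℝ}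
    (hX : m ∈ interior (integrableExpSet X (μ ∗ ν))) :
    expMean X (μ ∗ ν) m = expMean (fun u => expMean (fun v => X (u + v)) ν m) μ m := by
  rcases eq_or_ne m 0 with rfl | hm
  · simp only [expMean_zero, integral_conv (integrable_of_mem_interior_integrableExpSet hX)]
  have hexp : Integrable (fun u => Real.exp (m * X u)) (μ ∗ ν) :=
    interior_subset (s := integrableExpSet X (μ ∗ ν)) hX
  have hmgf : mgf X (μ ∗ ν) m = mgf (fun u => expMean (fun v => X (u + v)) ν m) μ m := by
    rw [mgf, mgf, integral_conv hexp]
    refine integral_congr_ae ?_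
    filter_upwards [((integrable_conv_iff hexp.1).1 hexp).1] with u hu
    exact (exp_mul_expMean hm hu).symm
  rw [expMean_of_ne_zero hm, expMean_of_ne_zero hm, cgf, cgf, hmgf]

end ExpMean

section LipschitzGaussian

variable {C : ℝ≥0} {g : ℝ → ℝ}

theorem integrableExpSet_gaussianReal_of_lipschitzWith (hg : LipschitzWith C g) (a : ℝ) (v : ℝ≥0) :
    integrableExpSet g (gaussianReal a v) = Set.univ := by
  refine Set.eq_univ_of_forall fun t => ?_
  have hbound : Integrable (fun z : ℝ => Real.exp (|t| * |g 0|) * Real.exp (|t| * C * |z|))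
      (gaussianReal a v) :=
    (integrable_exp_mul_abs (X := fun z : ℝ => z) (integrable_exp_mul_gaussianReal _)
      (integrable_exp_mul_gaussianReal _)).const_mul _
  refine hbound.mono' (by have := hg.continuous; fun_prop) (ae_of_all _ fun z => ?_)
  have hgz : |g z| ≤ |g 0| + C * |z| := by
    have hdist := hg.dist_le_mul z 0
    rw [Real.dist_eq, Real.dist_eq, sub_zero] at hdist
    linarith [abs_sub_abs_le_abs_sub (g z) (g 0)]
  rw [Real.norm_eq_abs, Real.abs_exp, ← Real.exp_add, Real.exp_le_exp]
  calc t * g z ≤ |t| * |g z| := (le_abs_self _).trans_eq (abs_mul t (g z))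
    _ ≤ |t| * (|g 0| + C * |z|) := by gcongr
    _ = |t| * |g 0| + |t| * C * |z| := by ring

theorem lipschitzWith_comp_add_left (hg : LipschitzWith C g) (y : ℝ) :
    LipschitzWith C fun z => g (y + z) := by
  simpa [Function.comp_def] using hg.comp (isometry_add_left y).lipschitz

theorem mem_interior_integrableExpSet_comp_add_left (hg : LipschitzWith C g) (y a : ℝ) (v : ℝ≥0)
    (m : ℝ) : m ∈ interior (integrableExpSet (fun z => g (y + z)) (gaussianReal a v)) := by
  simp [integrableExpSet_gaussianReal_of_lipschitzWith (lipschitzWith_comp_add_left hg y)]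

theorem stdGauss_map_mul_sqrt (s : ℝ) :
    stdGauss.map (fun z => z * Real.sqrt s) = gaussianReal 0 s.toNNReal := by
  rw [stdGauss, gaussianReal_map_mul_const, mul_zero, mul_one]
  congr 1
  ext
  simp [Real.sq_sqrt', Real.coe_toNNReal']

end LipschitzGaussian

section PStep

variable {C C' : ℝ≥0} {g g' : ℝ → ℝ}

theorem pStep_eq_expMean (hg : Measurable g) (m s y : ℝ) :
    pStep m s g y = expMean (fun z => g (y + z)) (gaussianReal 0 s.toNNReal) m := by
  have hgy : Measurable fun z => g (y + z) := hg.comp (measurable_const_add y)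
  rw [← stdGauss_map_mul_sqrt, expMean_map (by fun_prop) hgy.aestronglyMeasurable]
  rfl

theorem pStep_zero_right (m : ℝ) (g : ℝ → ℝ) : pStep m 0 g = g := by
  funext y
  by_cases hm : m = 0 <;> simp [pStep, hm]

theorem pStep_mono (hg : LipschitzWith C g) (hg' : LipschitzWith C' g') (hle : g ≤ g') (m s : ℝ) :
    pStep m s g ≤ pStep m s g' := fun y => by
  rw [pStep_eq_expMean hg.continuous.measurable, pStep_eq_expMean hg'.continuous.measurable]
  exact expMean_mono (mem_interior_integrableExpSet_comp_add_left hg _ _ _ _)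
    (mem_interior_integrableExpSet_comp_add_left hg' _ _ _ _) (ae_of_all _ fun z => hle (y + z))

theorem monotone_pStep_left (hg : LipschitzWith C g) (s : ℝ) : Monotone fun m => pStep m s g :=
  fun m m' hmm' y => by
    simp only [pStep_eq_expMean hg.continuous.measurable]
    exact monotoneOn_expMean (mem_interior_integrableExpSet_comp_add_left hg _ _ _ _)
      (mem_interior_integrableExpSet_comp_add_left hg _ _ _ _)
      (mem_interior_integrableExpSet_comp_add_left hg _ _ _ _) hmm'

theorem lipschitzWith_pStep (hg : LipschitzWith C g) (m s : ℝ) : LipschitzWith C (pStep m s g) := by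
  refine LipschitzWith.of_le_add_mul C fun u v => ?_
  have hint (w : ℝ) := mem_interior_integrableExpSet_comp_add_left hg w 0 s.toNNReal m
  rw [pStep_eq_expMean hg.continuous.measurable, pStep_eq_expMean hg.continuous.measurable,
    ← expMean_add_const (hint v)]
  refine expMean_mono (hint u) ?_ (ae_of_all _ fun z => ?_)
  · exact mem_interior_integrableExpSet_comp_add_left (hg.add (.const (C * dist u v))) v _ _ m
  · simpa using hg.le_add_mul (u + z) (v + z)

theorem pStep_pStep (hg : LipschitzWith C g) (m : ℝ) {s t : ℝ} (hs : 0 ≤ s) (ht : 0 ≤ t) :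
    pStep m s (pStep m t g) = pStep m (s + t) g := by
  funext y
  have hconv : gaussianReal 0 (s + t).toNNReal =
      gaussianReal 0 s.toNNReal ∗ gaussianReal 0 t.toNNReal := by
    rw [gaussianReal_conv_gaussianReal, Real.toNNReal_add hs ht, add_zero]
  have hint := mem_interior_integrableExpSet_comp_add_left hg y 0 (s + t).toNNReal m
  rw [hconv] at hint
  simp only [pStep_eq_expMean (lipschitzWith_pStep hg m t).continuous.measurable,
    pStep_eq_expMean hg.continuous.measurable, hconv, expMean_conv hint, add_assoc]

end PStep

section ParisiFlow

theorem Icc_backward_induction {α : Type*} [LinearOrder α] {a b : α} (S : Finset α) {P : α → Prop}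
    (right : P b)
    (step : ∀ ⦃r r'⦄, a ≤ r → r < r' → r' ≤ b → Disjoint (S : Set α) (Set.Ioo r r') →
      P r' → P r) :
    ∀ r ∈ Set.Icc a b, P r := by
  intro r hr
  induction hT : {s ∈ S | s ∈ Set.Ioo r b} using Finset.strongInduction generalizing r with
  | H T ih =>
    subst hT
    rcases hr.2.eq_or_lt with rfl | hrb
    · exact right
    rcases {s ∈ S | s ∈ Set.Ioo r b}.eq_empty_or_nonempty with hempty | hne
    · refine step hr.1 hrb le_rfl (Set.disjoint_left.2 fun s hs hsr => ?_) right
      exact Finset.notMem_empty s (hempty ▸ Finset.mem_filter.2 ⟨hs, hsr⟩)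
    · obtain ⟨r', hr', hmin⟩ := Finset.exists_minimal hne
      obtain ⟨-, hrr', hr'b⟩ := Finset.mem_filter.1 hr'
      refine step hr.1 hrr' hr'b.le (Set.disjoint_left.2 fun s hs hsr => ?_)
        (ih _ ?_ r' ⟨hr.1.trans hrr'.le, hr'b.le⟩ rfl)
      · have hr's := hmin (Finset.mem_filter.2 ⟨hs, hsr.1, hsr.2.trans hr'b⟩) hsr.2.le
        exact hr's.not_gt hsr.2
      · refine (Finset.ssubset_iff_of_subset ?_).2 ⟨r', hr', by simp⟩
        exact S.monotone_filter_right fun s _ hs => ⟨hrr'.trans hs.1, hs.2⟩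

variable {a b : ℝ} {S T : Finset ℝ} {x x' : ℝ → ℝ} {f f' : ℝ → ℝ → ℝ} {C C' : ℝ≥0}

/-- `f` solves the Parisi recursion on `[a, b]` for the order parameter `x`, a step function with
breakpoints in `S`: on an interval whose interior contains no breakpoint, `f` at the left end is
one step of `f` at the right end. The terminal condition `f b` is left free, and enlarging `S`
weakens the notion, so that two solutions can be put on common breakpoints. -/
def IsParisiFlow (a b : ℝ) (S : Finset ℝ) (x : ℝ → ℝ) (f : ℝ → ℝ → ℝ) : Prop :=
  ∀ ⦃r r'⦄, a ≤ r → r < r' → r' ≤ b → Disjoint (S : Set ℝ) (Set.Ioo r r') →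
    f r = pStep (x r) (r' - r) (f r')

namespace IsParisiFlow

theorem mono (hf : IsParisiFlow a b S x f) (hST : S ⊆ T) : IsParisiFlow a b T x f :=
  fun _ _ har hrr' hrb hdisj => hf har hrr' hrb (hdisj.mono_left (Finset.coe_subset.2 hST))

theorem lipschitzWith (hf : IsParisiFlow a b S x f) (hb : LipschitzWith C (f b)) :
    ∀ r ∈ Set.Icc a b, LipschitzWith C (f r) :=
  Icc_backward_induction S hb fun r r' har hrr' hrb hdisj hlip => by
    rw [hf har hrr' hrb hdisj]
    exact lipschitzWith_pStep hlip _ _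

theorem le (hf : IsParisiFlow a b S x f) (hf' : IsParisiFlow a b T x' f')
    (hx : ∀ r ∈ Set.Ico a b, x r ≤ x' r) (hC : LipschitzWith C (f b))
    (hC' : LipschitzWith C' (f' b)) (hb : f b ≤ f' b) :
    ∀ r ∈ Set.Icc a b, f r ≤ f' r := by
  classical
  refine Icc_backward_induction (S ∪ T) hb fun r r' har hrr' hrb hdisj hle => ?_
  have hr' : r' ∈ Set.Icc a b := ⟨har.trans hrr'.le, hrb⟩
  have hlip' : LipschitzWith C' (f' r') := hf'.lipschitzWith hC' r' hr'
  calc f r = pStep (x r) (r' - r) (f r') :=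
        hf.mono Finset.subset_union_left har hrr' hrb hdisj
    _ ≤ pStep (x r) (r' - r) (f' r') := pStep_mono (hf.lipschitzWith hC r' hr') hlip' hle _ _
    _ ≤ pStep (x' r) (r' - r) (f' r') :=
        monotone_pStep_left hlip' _ (hx r ⟨har, hrr'.trans_le hrb⟩)
    _ = f' r := (hf'.mono Finset.subset_union_right har hrr' hrb hdisj).symm

end IsParisiFlow

end ParisiFlow

section ParisiF

/-- `0 = q_0 ≤ q_1 ≤ … ≤ q_K = 1`: the nodes of a piecewise constant function on `[0, 1]`. The
values `q a` for `a > K` are irrelevant. -/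
structure IsNodeSequence (K : ℕ) (q : ℕ → ℝ) : Prop where
  zero : q 0 = 0
  top : q K = 1
  mono : MonotoneOn q (Set.Iic K)

theorem OrderParam.isNodeSequence (X : OrderParam) : IsNodeSequence X.K X.q where
  zero := X.hq0
  top := X.hqK
  mono := monotoneOn_of_le_succ Set.ordConnected_Iic fun a _ _ ha => X.hq_mono a ha

theorem lipschitzWith_log_cosh_mul (β : ℝ) :
    LipschitzWith ‖β‖₊ fun y => Real.log (Real.cosh (β * y)) := by
  have hlog : LipschitzWith 1 fun y => Real.log (Real.cosh y) := by
    refine lipschitzWith_of_nnnorm_deriv_le (fun y => ?_) fun y => ?_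
    · exact Real.differentiable_cosh.differentiableAt.log (Real.cosh_pos y).ne'
    · rw [deriv.log Real.differentiableAt_cosh (Real.cosh_pos y).ne', Real.deriv_cosh,
        ← Real.tanh_eq_sinh_div_cosh, ← NNReal.coe_le_coe, coe_nnnorm, Real.norm_eq_abs]
      exact (Real.abs_tanh_lt_one y).le
  exact one_mul ‖β‖₊ ▸ hlog.comp (lipschitzWith_smul β)

theorem lipschitzWith_parisiLevel (K : ℕ) (q m : ℕ → ℝ) (β : ℝ) (j : ℕ) :
    LipschitzWith ‖β‖₊ (parisiLevel K q m β j) := by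
  induction j with
  | zero => exact lipschitzWith_log_cosh_mul β
  | succ j ih => exact lipschitzWith_pStep ih _ _

theorem parisiLevel_sub {K c : ℕ} (hc : c < K) (q m : ℕ → ℝ) (β : ℝ) :
    parisiLevel K q m β (K - c) =
      pStep (m (c + 1)) (q (c + 1) - q c) (parisiLevel K q m β (K - (c + 1))) := by
  obtain ⟨j, rfl⟩ : ∃ j, K = c + 1 + j := Nat.exists_eq_add_of_le hc
  rw [show c + 1 + j - c = j + 1 by lia, Nat.add_sub_cancel_left, parisiLevel,
    Nat.add_sub_cancel, Nat.add_sub_cancel]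

namespace IsNodeSequence

variable {K : ℕ} {q : ℕ → ℝ} {r β : ℝ} {c : ℕ}

-- Nodes may coincide, and `parisiF` at their common position uses the level of the first of them.
theorem parisiLevel_congr (hq : IsNodeSequence K q) (m : ℕ → ℝ) (β : ℝ) {d : ℕ} (hdc : d ≤ c)
    (hc : c ≤ K) (hqdc : q d = q c) :
    parisiLevel K q m β (K - d) = parisiLevel K q m β (K - c) := by
  induction c, hdc using Nat.le_induction with
  | base => rfl
  | succ c hdc ih =>
    have hcK : c < K := hc
    have hqd : q d ≤ q c := hq.mono (hdc.trans hcK.le) hcK.le hdc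
    have hqc : q c ≤ q (c + 1) := hq.mono hcK.le hc c.le_succ
    rw [ih hcK.le (by linarith), parisiLevel_sub hcK, show q (c + 1) - q c = 0 by linarith,
      pStep_zero_right]

theorem parisiF_node (hq : IsNodeSequence K q) (m : ℕ → ℝ) (β : ℝ) (hc : c ≤ K) :
    parisiF K q m β (q c) = parisiLevel K q m β (K - c) := by
  have hmem : q c ≤ q (sInf {a | q c ≤ q a}) :=
    Nat.sInf_mem (s := {a | q c ≤ q a}) ⟨c, le_refl (q c)⟩
  have hle : sInf {a | q c ≤ q a} ≤ c := Nat.sInf_le (le_refl (q c))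
  have heq : q (sInf {a | q c ≤ q a}) = q c := (hq.mono (hle.trans hc) hc hle).antisymm hmem
  funext y
  rw [parisiF, heq, sub_self, pStep_zero_right, hq.parisiLevel_congr m β hle hc heq]

theorem parisiF_one (hq : IsNodeSequence K q) (m : ℕ → ℝ) (β : ℝ) :
    parisiF K q m β 1 = fun y => Real.log (Real.cosh (β * y)) := by
  rw [← hq.top, hq.parisiF_node m β le_rfl, Nat.sub_self, parisiLevel]

theorem parisiF_eq_pStep (hq : IsNodeSequence K q) (m : ℕ → ℝ) (β : ℝ) (hc : c < K)
    (hr : r ∈ Set.Icc (q c) (q (c + 1))) :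
    parisiF K q m β r =
      pStep (m (c + 1)) (q (c + 1) - r) (parisiLevel K q m β (K - (c + 1))) := by
  rcases hr.1.eq_or_lt with rfl | hcr
  · rw [hq.parisiF_node m β hc.le, parisiLevel_sub hc]
  · have hInf : sInf {a | r ≤ q a} = c + 1 := by
      refine le_antisymm (Nat.sInf_le hr.2) (le_csInf ⟨c + 1, hr.2⟩ fun a ha => ?_)
      by_contra! hac
      have : q a ≤ q c := hq.mono (by grind) hc.le (by grind)
      grind
    funext y
    rw [parisiF, hInf]

theorem exists_mem_Ico (hq : IsNodeSequence K q) (m : ℕ → ℝ) (hr : r ∈ Set.Ico (0 : ℝ) 1) :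
    ∃ c < K, r ∈ Set.Ico (q c) (q (c + 1)) ∧ xFun K q m r = m (c + 1) := by
  have hK : K ∈ {a | r < q a} := by simpa [hq.top] using hr.2
  have hlt : r < q (sInf {a | r < q a}) := Nat.sInf_mem ⟨K, hK⟩
  have hne : sInf {a | r < q a} ≠ 0 := fun h => by
    rw [h, hq.zero] at hlt
    exact hr.1.not_gt hlt
  obtain ⟨c, hc⟩ := Nat.exists_eq_succ_of_ne_zero hne
  rw [hc] at hlt
  have hle : q c ≤ r := not_lt.1 (Nat.notMem_of_lt_sInf (hc ▸ c.lt_succ_self))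
  refine ⟨c, Nat.lt_of_succ_le (hc ▸ Nat.sInf_le hK), ⟨hle, hlt⟩, ?_⟩
  rw [xFun, if_neg hr.2.not_ge, hc]

theorem isParisiFlow (hq : IsNodeSequence K q) (m : ℕ → ℝ) (β : ℝ) :
    IsParisiFlow 0 1 ((Finset.range (K + 1)).image q) (xFun K q m) (parisiF K q m β) := by
  intro r r' hr hrr' hr' hdisj
  obtain ⟨c, hc, ⟨hcr, hrc⟩, hx⟩ := hq.exists_mem_Ico m ⟨hr, hrr'.trans_le hr'⟩
  have hr'c : r' ≤ q (c + 1) := by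
    by_contra! h
    exact hdisj.notMem_of_mem_left (by simpa using ⟨c + 1, by lia, rfl⟩) ⟨hrc, h⟩
  rw [hx, hq.parisiF_eq_pStep m β hc ⟨hcr, hrc.le⟩,
    hq.parisiF_eq_pStep m β hc ⟨hcr.trans hrr'.le, hr'c⟩,
    pStep_pStep (lipschitzWith_parisiLevel K q m β _) _ (sub_nonneg.2 hrr'.le) (sub_nonneg.2 hr'c),
    sub_add_sub_cancel']

end IsNodeSequence

theorem parisiF_mono_general {K K' : ℕ} {q q' m m' : ℕ → ℝ} (hq : IsNodeSequence K q)
    (hq' : IsNodeSequence K' q') (β : ℝ)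
    (hle : ∀ r ∈ Set.Ico (0 : ℝ) 1, xFun K q m r ≤ xFun K' q' m' r) :
    ∀ r ∈ Set.Icc (0 : ℝ) 1, ∀ y : ℝ, parisiF K q m β r y ≤ parisiF K' q' m' β r y := by
  have hone : parisiF K q m β 1 = parisiF K' q' m' β 1 := by
    rw [hq.parisiF_one, hq'.parisiF_one]
  have hlip' : LipschitzWith ‖β‖₊ (parisiF K' q' m' β 1) := by
    rw [hq'.parisiF_one]
    exact lipschitzWith_log_cosh_mul β
  exact (hq.isParisiFlow m β).le (hq'.isParisiFlow m' β) hle (hone ▸ hlip') hlip' hone.le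

end ParisiF

/-- monotonicity of the Parisi function in the functional order parameter:
if `x(r) ≤ x̄(r)` for all `r ∈ [0,1]`, then `f(r, y; x, β) ≤ f(r, y; x̄, β)`
for every `r ∈ [0,1]`, `y ∈ ℝ` and `β ≥ 0`. -/
theorem parisiF_mono (X Y : OrderParam) (β : ℝ) (hβ : 0 ≤ β)
    (hle : ∀ r ∈ Set.Icc (0 : ℝ) 1, xFun X.K X.q X.m r ≤ xFun Y.K Y.q Y.m r) :
    ∀ r ∈ Set.Icc (0 : ℝ) 1, ∀ y : ℝ,
      parisiF X.K X.q X.m β r y ≤ parisiF Y.K Y.q Y.m β r y := by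
  exact parisiF_mono_general X.isNodeSequence Y.isNodeSequence β
    fun r hr => hle r (Set.Ico_subset_Icc_self hr)

end
end

section
/- Let g : ℝ → ℝ be a smooth function with bounded first and second derivatives, let q* ∈ (0,1] and m > 0. Define, for q < q* and y ∈ ℝ, F(q,y) = (1/m) log ∫ exp(m g(y + z√(q* − q))) dμ(z), where μ is the standard Gaussian measure on ℝ. Then F satisfies the antiparabolic equation ∂_q F(q,y) + (1/2)(∂²_y F(q,y) + m (∂_y F(q,y))²) = 0 for q < q*, with F(q,y) → g(y) as q → q*. Moreover, if instead m = 0 and F(q,y) = ∫ g(y + z√(q* − q)) dμ(z), then ∂_q F(q,y) + (1/2) ∂²_y F(q,y) = 0 with the same final condition. -/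
open MeasureTheory ProbabilityTheory Filter

noncomputable section

/-!
For `m ≠ 0` the Cole–Hopf substitution `u = exp (m F)` linearizes the antiparabolic equation: in
the time `s = q* - r` it becomes the heat equation `∂_s u = ½ ∂²_y u`, and
`exp (m · pStep m s g y)` is the Gaussian average `E[H (y + z √s)]` of `H = exp (m g)`. That such
averages solve the heat equation is seen by differentiating under the integral sign and integrating
by parts against the Gaussian density, `E[f(z) z] = E[f'(z)]`. The same computation with `H = g`
covers `m = 0`. A bounded `g'` makes `exp (m g)` grow at most exponentially, which justifies the
differentiations.
-/

/-- Functions dominated by `A * exp (B * |x|)`: the class on which Gaussian averages converge, and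
which is stable under the operations needed to differentiate them. The signs of `A` and `B` are part
of the definition so that growth constants can be added and multiplied. -/
def HasExpGrowth (H : ℝ → ℝ) : Prop :=
  ∃ A B : ℝ, 0 ≤ A ∧ 0 ≤ B ∧ ∀ x, |H x| ≤ A * Real.exp (B * |x|)

namespace HasExpGrowth

variable {G H : ℝ → ℝ}

lemma of_abs_le {C : ℝ} (hC : ∀ x, |H x| ≤ C) : HasExpGrowth H :=
  ⟨C, 0, (abs_nonneg _).trans (hC 0), le_rfl, fun x => by simpa using hC x⟩

lemma add (hG : HasExpGrowth G) (hH : HasExpGrowth H) : HasExpGrowth fun x => G x + H x := by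
  obtain ⟨A, B, hA, hB, hG⟩ := hG
  obtain ⟨A', B', hA', hB', hH⟩ := hH
  refine ⟨A + A', B + B', by positivity, by positivity, fun x => ?_⟩
  calc |G x + H x| ≤ |G x| + |H x| := abs_add_le _ _
    _ ≤ A * Real.exp (B * |x|) + A' * Real.exp (B' * |x|) := add_le_add (hG x) (hH x)
    _ ≤ A * Real.exp ((B + B') * |x|) + A' * Real.exp ((B + B') * |x|) := by
        gcongr <;> linarith
    _ = (A + A') * Real.exp ((B + B') * |x|) := by ring

lemma mul (hG : HasExpGrowth G) (hH : HasExpGrowth H) : HasExpGrowth fun x => G x * H x := by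
  obtain ⟨A, B, hA, hB, hG⟩ := hG
  obtain ⟨A', B', hA', hB', hH⟩ := hH
  refine ⟨A * A', B + B', by positivity, by positivity, fun x => ?_⟩
  calc |G x * H x| = |G x| * |H x| := abs_mul _ _
    _ ≤ A * Real.exp (B * |x|) * (A' * Real.exp (B' * |x|)) := by gcongr; exacts [hG x, hH x]
    _ = A * A' * Real.exp ((B + B') * |x|) := by rw [add_mul, Real.exp_add]; ring

lemma of_deriv (hH : Differentiable ℝ H) (hH' : HasExpGrowth (deriv H)) : HasExpGrowth H := by
  obtain ⟨A, B, hA, hB, hbound⟩ := hH'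
  refine ⟨|H 0| + A, B + 1, by positivity, by positivity, fun x => ?_⟩
  have hmvt : |H x - H 0| ≤ A * Real.exp (B * |x|) * |x| := by
    have hderiv : ∀ u ∈ Metric.closedBall (0 : ℝ) |x|, ‖deriv H u‖ ≤ A * Real.exp (B * |x|) := by
      intro u hu
      have hu : |u| ≤ |x| := by simpa using hu
      exact (hbound u).trans (by gcongr)
    simpa using (convex_closedBall (0 : ℝ) |x|).norm_image_sub_le_of_norm_deriv_le
      (fun u _ => hH u) hderiv (x := 0) (y := x) (by simp) (by simp)
  have hx : |x| ≤ Real.exp |x| := by linarith [Real.add_one_le_exp |x|]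
  have hone : 1 ≤ Real.exp ((B + 1) * |x|) := Real.one_le_exp (by positivity)
  calc |H x| ≤ |H 0| + |H x - H 0| := by linarith [abs_sub_abs_le_abs_sub (H x) (H 0)]
    _ ≤ |H 0| * 1 + A * Real.exp (B * |x|) * Real.exp |x| := by
        rw [mul_one]; gcongr; exact hmvt.trans (by gcongr)
    _ ≤ |H 0| * Real.exp ((B + 1) * |x|) + A * Real.exp ((B + 1) * |x|) := by
        rw [add_one_mul, Real.exp_add, mul_assoc]; rw [add_one_mul, Real.exp_add] at hone; gcongr
    _ = (|H 0| + A) * Real.exp ((B + 1) * |x|) := by ring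

lemma exp_comp_of_lipschitz {K : NNReal} (hH : LipschitzWith K H) :
    HasExpGrowth fun x => Real.exp (H x) := by
  refine ⟨Real.exp (H 0), K, by positivity, by positivity, fun x => ?_⟩
  have hdist : |H x - H 0| ≤ K * |x| := by simpa [Real.dist_eq] using hH.dist_le_mul x 0
  rw [Real.abs_exp, ← Real.exp_add, Real.exp_le_exp]
  linarith [le_abs_self (H x - H 0)]

lemma exists_abs_comp_line_le (hH : HasExpGrowth H) {T : ℝ} (hT : 0 ≤ T) :
    ∃ A B : ℝ, 0 ≤ A ∧ ∀ t, |t| ≤ T → ∀ u v,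
      |H (u + v * t)| ≤ A * Real.exp (B * (|u| + |v|)) := by
  obtain ⟨A, B, hA, hB, hbound⟩ := hH
  refine ⟨A, B * (T + 1), hA, fun t ht u v => (hbound _).trans ?_⟩
  have hline : |u + v * t| ≤ (T + 1) * (|u| + |v|) :=
    calc |u + v * t| ≤ |u| + |v| * |t| := (abs_add_le _ _).trans_eq (by rw [abs_mul])
      _ ≤ |u| + |v| * T := by gcongr
      _ ≤ (T + 1) * (|u| + |v|) := by nlinarith [abs_nonneg u, abs_nonneg v]
  rw [mul_assoc]
  gcongr

end HasExpGrowth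

section ExponentialMoments

variable {Ω : Type*} [MeasurableSpace Ω] {μ : Measure Ω} {U V : Ω → ℝ} {H : ℝ → ℝ}

lemma integrable_comp_line (hH : Measurable H) (hgrowth : HasExpGrowth H)
    (hU : AEMeasurable U μ) (hV : AEMeasurable V μ)
    (hUV : ∀ c : ℝ, Integrable (fun ω => Real.exp (c * (|U ω| + |V ω|))) μ) (t : ℝ) :
    Integrable (fun ω => H (U ω + V ω * t)) μ := by
  obtain ⟨A, B, -, hbound⟩ := hgrowth.exists_abs_comp_line_le (abs_nonneg t)
  exact ((hUV B).const_mul A).mono'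
    (hH.comp_aemeasurable (hU.add (hV.mul_const t))).aestronglyMeasurable
    (ae_of_all _ fun ω => hbound t le_rfl _ _)

theorem hasDerivAt_integral_comp_line (hH : Differentiable ℝ H) (hH' : HasExpGrowth (deriv H))
    (hU : AEMeasurable U μ) (hV : AEMeasurable V μ)
    (hUV : ∀ c : ℝ, Integrable (fun ω => Real.exp (c * (|U ω| + |V ω|))) μ) (t : ℝ) :
    Integrable (fun ω => deriv H (U ω + V ω * t) * V ω) μ ∧
      HasDerivAt (fun t => ∫ ω, H (U ω + V ω * t) ∂μ)
        (∫ ω, deriv H (U ω + V ω * t) * V ω ∂μ) t := by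
  have hline (t : ℝ) : AEMeasurable (fun ω => U ω + V ω * t) μ := hU.add (hV.mul_const t)
  obtain ⟨A, B, hA, hbound⟩ :=
    hH'.exists_abs_comp_line_le (T := |t| + 1) (by positivity)
  refine hasDerivAt_integral_of_dominated_loc_of_deriv_le
    (F' := fun t ω => deriv H (U ω + V ω * t) * V ω)
    (bound := fun ω => A * Real.exp ((B + 1) * (|U ω| + |V ω|)))
    (Metric.ball_mem_nhds t one_pos) ?_ ?_ ?_ ?_ ((hUV _).const_mul A) ?_
  · exact Eventually.of_forall fun t =>
      (hH.continuous.measurable.comp_aemeasurable (hline t)).aestronglyMeasurable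
  · exact integrable_comp_line hH.continuous.measurable (.of_deriv hH hH') hU hV hUV t
  · exact (((measurable_deriv H).comp_aemeasurable (hline t)).mul hV).aestronglyMeasurable
  · refine ae_of_all _ fun ω x hx => ?_
    have hx : |x| ≤ |t| + 1 := by
      have : |x - t| < 1 := hx
      linarith [abs_sub_abs_le_abs_sub x t]
    have hV_le : |V ω| ≤ Real.exp (|U ω| + |V ω|) := by
      linarith [Real.add_one_le_exp (|U ω| + |V ω|), abs_nonneg (U ω)]
    calc ‖deriv H (U ω + V ω * x) * V ω‖ = |deriv H (U ω + V ω * x)| * |V ω| := abs_mul _ _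
      _ ≤ A * Real.exp (B * (|U ω| + |V ω|)) * Real.exp (|U ω| + |V ω|) := by
          gcongr
          exact hbound x hx _ _
      _ = A * Real.exp ((B + 1) * (|U ω| + |V ω|)) := by
          rw [add_one_mul B, Real.exp_add (B * _), mul_assoc]
  · refine ae_of_all _ fun ω x _ => ?_
    exact (hH _).hasDerivAt.comp x
      (by simpa using ((hasDerivAt_id x).const_mul (V ω)).const_add (U ω))

end ExponentialMoments

section GaussianIntegrationByParts

variable {μ : ℝ} {v : NNReal}

lemma hasDerivAt_gaussianPDFReal (x : ℝ) :
    HasDerivAt (gaussianPDFReal μ v) (-((x - μ) / v) * gaussianPDFReal μ v x) x := by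
  have hexponent : HasDerivAt (fun x : ℝ => -(x - μ) ^ 2 / (2 * v)) (-((x - μ) / v)) x := by
    refine ((((hasDerivAt_id x).sub_const μ).pow 2).neg.div_const (2 * (v : ℝ))).congr_deriv ?_
    simp only [id_eq, Nat.cast_ofNat, Nat.add_one_sub_one, pow_one, mul_one]
    ring
  rw [gaussianPDFReal_def]
  exact (hexponent.exp.const_mul _).congr_deriv (by ring)

lemma integrable_gaussianReal_iff (hv : v ≠ 0) {f : ℝ → ℝ} :
    Integrable f (gaussianReal μ v) ↔ Integrable fun x => f x * gaussianPDFReal μ v x := by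
  rw [gaussianReal_of_var_ne_zero _ hv, integrable_withDensity_iff_integrable_smul'
    (measurable_gaussianPDF _ _) (ae_of_all _ fun _ => gaussianPDF_lt_top)]
  simp only [toReal_gaussianPDF, smul_eq_mul, mul_comm]

theorem integral_mul_sub_mean_gaussianReal {f : ℝ → ℝ} (hf : Differentiable ℝ f)
    (hint : Integrable f (gaussianReal μ v)) (hint' : Integrable (deriv f) (gaussianReal μ v))
    (hintx : Integrable (fun x => f x * (x - μ)) (gaussianReal μ v)) :
    ∫ x, f x * (x - μ) ∂gaussianReal μ v = v * ∫ x, deriv f x ∂gaussianReal μ v := by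
  rcases eq_or_ne v 0 with rfl | hv
  · simp
  have hv' : (v : ℝ) ≠ 0 := by exact_mod_cast hv
  rw [integrable_gaussianReal_iff hv] at hint hint' hintx
  have hpdf (x : ℝ) : f x * (-((x - μ) / v) * gaussianPDFReal μ v x) =
      -(v : ℝ)⁻¹ * (f x * (x - μ) * gaussianPDFReal μ v x) := by ring
  have hparts := integral_mul_deriv_eq_deriv_mul_of_integrable (fun x _ => (hf x).hasDerivAt)
    (fun x _ => hasDerivAt_gaussianPDFReal (μ := μ) (v := v) x)
    ((hintx.const_mul (-(v : ℝ)⁻¹)).congr (ae_of_all _ fun x => (hpdf x).symm)) hint' hint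
  simp only [hpdf, integral_const_mul] at hparts
  simp only [integral_gaussianReal_eq_integral_smul hv, smul_eq_mul,
    mul_comm (gaussianPDFReal μ v _)]
  field_simp at hparts
  linarith

end GaussianIntegrationByParts

/-- The heat semigroup of `½ ∂²_y` at time `s`, written as an average over the standard Gaussian
measure; for negative `s` it is the identity, since `√s = 0` there. -/
def gaussianSmoothing (H : ℝ → ℝ) (s y : ℝ) : ℝ := ∫ z, H (y + z * √s) ∂stdGauss

lemma integrable_exp_mul_abs_stdGauss (c : ℝ) :
    Integrable (fun z => Real.exp (c * |z|)) stdGauss :=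
  integrable_exp_mul_abs (X := id) (integrable_exp_mul_gaussianReal c)
    (integrable_exp_mul_gaussianReal (-c))

lemma integrable_exp_mul_abs_const_add_abs_stdGauss (y c : ℝ) :
    Integrable (fun z => Real.exp (c * (|y| + |z|))) stdGauss := by
  simpa only [mul_add, Real.exp_add] using (integrable_exp_mul_abs_stdGauss c).const_mul _

section HeatEquation

variable {H : ℝ → ℝ}

lemma integrable_comp_affine_stdGauss (hH : Measurable H) (hgrowth : HasExpGrowth H) (y σ : ℝ) :
    Integrable (fun z => H (y + z * σ)) stdGauss :=
  integrable_comp_line hH hgrowth aemeasurable_const aemeasurable_id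
    (integrable_exp_mul_abs_const_add_abs_stdGauss y) σ

lemma hasDerivAt_integral_comp_scale_stdGauss (hH : Differentiable ℝ H)
    (hH' : HasExpGrowth (deriv H)) (y σ : ℝ) :
    Integrable (fun z => deriv H (y + z * σ) * z) stdGauss ∧
      HasDerivAt (fun σ => ∫ z, H (y + z * σ) ∂stdGauss)
        (∫ z, deriv H (y + z * σ) * z ∂stdGauss) σ :=
  hasDerivAt_integral_comp_line hH hH' aemeasurable_const aemeasurable_id
    (integrable_exp_mul_abs_const_add_abs_stdGauss y) σ

lemma gaussianSmoothing_zero (H : ℝ → ℝ) (y : ℝ) : gaussianSmoothing H 0 y = H y := by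
  simp [gaussianSmoothing]

lemma continuous_gaussianSmoothing_time (hH : Differentiable ℝ H) (hH' : HasExpGrowth (deriv H))
    (y : ℝ) : Continuous fun s => gaussianSmoothing H s y := by
  have hscale : Continuous fun σ => ∫ z, H (y + z * σ) ∂stdGauss :=
    continuous_iff_continuousAt.2 fun σ =>
      (hasDerivAt_integral_comp_scale_stdGauss hH hH' y σ).2.continuousAt
  exact hscale.comp Real.continuous_sqrt

theorem hasDerivAt_gaussianSmoothing_space (hH : Differentiable ℝ H)
    (hH' : HasExpGrowth (deriv H)) (s y : ℝ) :
    HasDerivAt (gaussianSmoothing H s) (gaussianSmoothing (deriv H) s y) y := by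
  have hexp (c : ℝ) :
      Integrable (fun z => Real.exp (c * (|z * √s| + |(1 : ℝ)|))) stdGauss := by
    simp only [abs_mul, mul_add, Real.exp_add]
    simpa only [mul_comm, mul_left_comm, mul_assoc] using
      (integrable_exp_mul_abs_stdGauss (c * |√s|)).mul_const (Real.exp (c * |(1 : ℝ)|))
  have hline := (hasDerivAt_integral_comp_line hH hH' (by fun_prop) aemeasurable_const hexp y).2
  simp only [one_mul, mul_one, add_comm] at hline
  exact hline

lemma deriv_gaussianSmoothing_space (hH : Differentiable ℝ H) (hH' : HasExpGrowth (deriv H))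
    (s : ℝ) : deriv (gaussianSmoothing H s) = gaussianSmoothing (deriv H) s :=
  funext fun y => (hasDerivAt_gaussianSmoothing_space hH hH' s y).deriv

-- By the chain rule `∂_s = (2σ)⁻¹ ∂_σ` with `σ = √s`, and integration by parts turns the factor `z`
-- produced by `∂_σ` into `σ ∂_y`.
theorem hasDerivAt_gaussianSmoothing_time (hH : Differentiable ℝ H)
    (hderiv : Differentiable ℝ (deriv H)) (hH'' : HasExpGrowth (deriv (deriv H)))
    {s : ℝ} (hs : 0 < s) (y : ℝ) :
    HasDerivAt (fun s => gaussianSmoothing H s y)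
      (1 / 2 * gaussianSmoothing (deriv (deriv H)) s y) s := by
  have hsqrt : √s ≠ 0 := (Real.sqrt_pos.2 hs).ne'
  have hH' : HasExpGrowth (deriv H) := .of_deriv hderiv hH''
  obtain ⟨hintz, hscale⟩ := hasDerivAt_integral_comp_scale_stdGauss hH hH' y √s
  have hd (z : ℝ) : HasDerivAt (fun z => deriv H (y + z * √s))
      (deriv (deriv H) (y + z * √s) * √s) z :=
    (hderiv _).hasDerivAt.comp z (by simpa using ((hasDerivAt_id z).mul_const √s).const_add y)
  have hparts : ∫ z, deriv H (y + z * √s) * z ∂stdGauss =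
      gaussianSmoothing (deriv (deriv H)) s y * √s := by
    have hd' : (deriv fun z => deriv H (y + z * √s)) = fun z => deriv (deriv H) (y + z * √s) * √s :=
      funext fun z => (hd z).deriv
    have hint' := (integrable_comp_affine_stdGauss (measurable_deriv _) hH'' y √s).mul_const √s
    have hstein := integral_mul_sub_mean_gaussianReal (μ := 0) (v := 1)
      (fun z => (hd z).differentiableAt)
      (integrable_comp_affine_stdGauss (measurable_deriv H) hH' y √s) (by rwa [hd'])
      (by simp only [sub_zero]; exact hintz)
    simp only [sub_zero, NNReal.coe_one, one_mul, hd', integral_mul_const] at hstein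
    exact hstein
  refine (hscale.comp s (Real.hasDerivAt_sqrt hs.ne')).congr_deriv ?_
  rw [hparts]
  field_simp

theorem gaussianSmoothing_heat_equation (hH : Differentiable ℝ H)
    (hderiv : Differentiable ℝ (deriv H)) (hH'' : HasExpGrowth (deriv (deriv H)))
    {s : ℝ} (hs : 0 < s) (y : ℝ) :
    HasDerivAt (fun s => gaussianSmoothing H s y)
      (1 / 2 * deriv (deriv (gaussianSmoothing H s)) y) s := by
  rw [deriv_gaussianSmoothing_space hH (.of_deriv hderiv hH''),
    deriv_gaussianSmoothing_space hderiv hH'']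
  exact hasDerivAt_gaussianSmoothing_time hH hderiv hH'' hs y

end HeatEquation

theorem hasDerivAt_coleHopf {m : ℝ} (hm : m ≠ 0) {u : ℝ → ℝ → ℝ} {s y : ℝ} (hu : ∀ y, u s y ≠ 0)
    (hspace : Differentiable ℝ (u s)) (hspace' : DifferentiableAt ℝ (deriv (u s)) y)
    (hheat : HasDerivAt (fun s => u s y) (1 / 2 * deriv (deriv (u s)) y) s) :
    HasDerivAt (fun s => m⁻¹ * Real.log (u s y))
      (1 / 2 * (deriv (deriv fun y => m⁻¹ * Real.log (u s y)) y
        + m * deriv (fun y => m⁻¹ * Real.log (u s y)) y ^ 2)) s := by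
  have hfirst : (deriv fun y => m⁻¹ * Real.log (u s y)) =
      fun y => m⁻¹ * (deriv (u s) y / u s y) :=
    funext fun y => (((hspace y).hasDerivAt.log (hu y)).const_mul m⁻¹).deriv
  have hsecond := ((hspace'.hasDerivAt.fun_div (hspace y).hasDerivAt (hu y)).const_mul m⁻¹).deriv
  refine ((hheat.log (hu y)).const_mul m⁻¹).congr_deriv ?_
  rw [hfirst, hsecond]
  have hne := hu y
  field_simp
  ring

section ParisiStep

variable {g : ℝ → ℝ} {C m : ℝ}

lemma pStep_zero_left (s : ℝ) (g : ℝ → ℝ) : pStep 0 s g = gaussianSmoothing g s :=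
  funext fun _ => if_pos rfl

lemma pStep_of_ne_zero (hm : m ≠ 0) (s : ℝ) (g : ℝ → ℝ) :
    pStep m s g =
      fun y => m⁻¹ * Real.log (gaussianSmoothing (fun x => Real.exp (m * g x)) s y) :=
  funext fun _ => if_neg hm

lemma pStep_zero_time (m : ℝ) (g : ℝ → ℝ) (y : ℝ) : pStep m 0 g y = g y := by
  rcases eq_or_ne m 0 with rfl | hm
  · rw [pStep_zero_left, gaussianSmoothing_zero]
  · simp only [pStep_of_ne_zero hm, gaussianSmoothing_zero, Real.log_exp, inv_mul_cancel_left₀ hm]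

lemma hasExpGrowth_exp_mul (hg : Differentiable ℝ g) (hC : ∀ y, |deriv g y| ≤ C) (m : ℝ) :
    HasExpGrowth fun x => Real.exp (m * g x) := by
  have hlip : LipschitzWith (‖m‖₊ * C.toNNReal) fun x => m * g x :=
    (lipschitzWith_smul m).comp (lipschitzWith_of_nnnorm_deriv_le hg fun y => by
      rw [← NNReal.coe_le_coe, coe_nnnorm]
      exact (hC y).trans (Real.le_coe_toNNReal C))
  exact .exp_comp_of_lipschitz hlip

lemma deriv_exp_mul (hg : Differentiable ℝ g) (m : ℝ) :
    (deriv fun x => Real.exp (m * g x)) = fun x => m * deriv g x * Real.exp (m * g x) :=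
  funext fun x => (((hg x).hasDerivAt.const_mul m).exp.congr_deriv (mul_comm _ _)).deriv

lemma deriv_deriv_exp_mul (hg : Differentiable ℝ g) (hg' : Differentiable ℝ (deriv g)) (m : ℝ) :
    deriv (deriv fun x => Real.exp (m * g x)) =
      fun x => (m * deriv (deriv g) x + m * deriv g x * (m * deriv g x)) * Real.exp (m * g x) := by
  rw [deriv_exp_mul hg]
  refine funext fun x => (((hg' x).hasDerivAt.const_mul m).fun_mul
    ((hg x).hasDerivAt.const_mul m).exp).deriv.trans ?_
  ring

lemma hasExpGrowth_deriv_deriv_exp_mul (hg : Differentiable ℝ g)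
    (hg' : Differentiable ℝ (deriv g)) (hC : ∀ y, |deriv g y| ≤ C)
    (hg'' : HasExpGrowth (deriv (deriv g))) (m : ℝ) :
    HasExpGrowth (deriv (deriv fun x => Real.exp (m * g x))) := by
  have hm : HasExpGrowth fun _ => m := .of_abs_le fun _ => le_rfl
  have hmg' : HasExpGrowth fun x => m * deriv g x := hm.mul (.of_abs_le hC)
  rw [deriv_deriv_exp_mul hg hg']
  exact ((hm.mul hg'').add (hmg'.mul hmg')).mul (hasExpGrowth_exp_mul hg hC m)

lemma gaussianSmoothing_exp_mul_pos (hg : Differentiable ℝ g) (hC : ∀ y, |deriv g y| ≤ C)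
    (m s y : ℝ) : 0 < gaussianSmoothing (fun x => Real.exp (m * g x)) s y :=
  integral_exp_pos (integrable_comp_affine_stdGauss
    (Real.measurable_exp.comp (hg.continuous.measurable.const_mul m))
    (hasExpGrowth_exp_mul hg hC m) y _)

theorem continuous_pStep_time (hg : Differentiable ℝ g) (hC : ∀ y, |deriv g y| ≤ C)
    (m y : ℝ) : Continuous fun s => pStep m s g y := by
  rcases eq_or_ne m 0 with rfl | hm
  · simpa only [pStep_zero_left] using
      continuous_gaussianSmoothing_time hg (.of_abs_le hC) y
  · have hexp' : HasExpGrowth (deriv fun x => Real.exp (m * g x)) := by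
      rw [deriv_exp_mul hg]
      exact ((HasExpGrowth.of_abs_le fun _ => le_rfl).mul (.of_abs_le hC)).mul
        (hasExpGrowth_exp_mul hg hC m)
    simp only [pStep_of_ne_zero hm]
    exact ((continuous_gaussianSmoothing_time (by fun_prop) hexp' y).log fun s =>
      (gaussianSmoothing_exp_mul_pos hg hC m s y).ne').const_mul m⁻¹

theorem hasDerivAt_pStep_time (hg : Differentiable ℝ g) (hg' : Differentiable ℝ (deriv g))
    (hC : ∀ y, |deriv g y| ≤ C) (hg'' : HasExpGrowth (deriv (deriv g))) (m : ℝ)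
    {s : ℝ} (hs : 0 < s) (y : ℝ) :
    HasDerivAt (fun s => pStep m s g y)
      (1 / 2 * (deriv (deriv (pStep m s g)) y + m * deriv (pStep m s g) y ^ 2)) s := by
  rcases eq_or_ne m 0 with rfl | hm
  · simpa only [pStep_zero_left, zero_mul, add_zero] using
      gaussianSmoothing_heat_equation hg hg' hg'' hs y
  · have hexp : Differentiable ℝ fun x => Real.exp (m * g x) := by fun_prop
    have hexp' : Differentiable ℝ (deriv fun x => Real.exp (m * g x)) := by
      rw [deriv_exp_mul hg]; fun_prop
    have hexp'' := hasExpGrowth_deriv_deriv_exp_mul hg hg' hC hg'' m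
    have hgrowth' := HasExpGrowth.of_deriv hexp' hexp''
    simp only [pStep_of_ne_zero hm]
    refine hasDerivAt_coleHopf hm (fun y => (gaussianSmoothing_exp_mul_pos hg hC m s y).ne')
      (fun y => (hasDerivAt_gaussianSmoothing_space hexp hgrowth' s y).differentiableAt) ?_
      (gaussianSmoothing_heat_equation hexp hexp' hexp'' hs y)
    rw [deriv_gaussianSmoothing_space hexp hgrowth']
    exact (hasDerivAt_gaussianSmoothing_space hexp' hexp'' s y).differentiableAt

end ParisiStep

theorem pStep_antiparabolic_general {g : ℝ → ℝ} (hg : Differentiable ℝ g)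
    (hg' : Differentiable ℝ (deriv g)) {C : ℝ} (hC : ∀ y, |deriv g y| ≤ C)
    (hg'' : HasExpGrowth (deriv (deriv g))) (qstar m : ℝ) :
    (∀ r : ℝ, r < qstar → ∀ y : ℝ,
        deriv (fun r' => pStep m (qstar - r') g y) r
          + 1 / 2 * (deriv (deriv (fun y' => pStep m (qstar - r) g y')) y
              + m * (deriv (fun y' => pStep m (qstar - r) g y') y) ^ 2) = 0)
    ∧ (∀ y : ℝ, Tendsto (fun r => pStep m (qstar - r) g y)
        (nhdsWithin qstar (Set.Iio qstar)) (nhds (g y))) := by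
  refine ⟨fun r hr y => ?_, fun y => ?_⟩
  · rw [deriv_comp_const_sub (fun s => pStep m s g y),
      (hasDerivAt_pStep_time hg hg' hC hg'' m (sub_pos.2 hr) y).deriv]
    exact neg_add_cancel _
  · have hcont : Continuous fun r => pStep m (qstar - r) g y :=
      (continuous_pStep_time hg hC m y).comp (continuous_const.sub continuous_id)
    have hlim := hcont.tendsto qstar
    rw [sub_self, pStep_zero_time] at hlim
    exact hlim.mono_left nhdsWithin_le_nhds

/-- one step of the Parisi recursion solves the antiparabolic equation:
for smooth `g` with bounded first and second derivatives, `q* ∈ (0,1]` and `m ≥ 0`,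
the function `F(r, y) = pStep m (q* − r) g y` (which is
`(1/m) log ∫ exp(m g(y + z√(q*−r))) dμ(z)` for `m > 0`, and
`∫ g(y + z√(q*−r)) dμ(z)` for `m = 0`) satisfies
`∂_r F + (1/2)(∂²_y F + m (∂_y F)²) = 0` for `r < q*`, and `F(r, y) → g(y)` as `r → q*⁻`. -/
theorem pStep_antiparabolic (g : ℝ → ℝ) (hg : ContDiff ℝ (⊤ : ℕ∞) g)
    (C : ℝ) (hC : ∀ y : ℝ, |deriv g y| ≤ C ∧ |deriv (deriv g) y| ≤ C)
    (qstar m : ℝ) (hq : qstar ∈ Set.Ioc (0 : ℝ) 1) (hm : 0 ≤ m) :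
    (∀ r : ℝ, r < qstar → ∀ y : ℝ,
        deriv (fun r' => pStep m (qstar - r') g y) r
          + 1 / 2 * (deriv (deriv (fun y' => pStep m (qstar - r) g y')) y
              + m * (deriv (fun y' => pStep m (qstar - r) g y') y) ^ 2) = 0)
    ∧ (∀ y : ℝ, Tendsto (fun r => pStep m (qstar - r) g y)
        (nhdsWithin qstar (Set.Iio qstar)) (nhds (g y))) := by
  have hg' : ContDiff ℝ (⊤ : ℕ∞) (deriv g) := (contDiff_infty_iff_deriv.1 hg).2
  exact pStep_antiparabolic_general (hg.differentiable (by simp)) (hg'.differentiable (by simp))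
    (fun y => (hC y).1) (.of_abs_le fun y => (hC y).2) qstar m

end
end
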